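/- arXiv:math/9204227 — 2 statements merged into one kernel-verified Lean document; each statement's English description precedes it below -/
import Mathlib

section
/- Let 𝕂 be ℝ or ℂ and let s be a finite-dimensional Lie algebra over 𝕂 which is a semidirect sum s = r + u, where u is an abelian ideal of s, r is a semisimple Lie subalgebra of s with r ∩ u = 0 and r + u = s, and the space of r-invariants in u is zero (i.e., the only x ∈ u satisfying ⁅y, x⁆ = 0 for all y ∈ r is x = 0). Let γ be an element of the dual space s*. Then the coadjoint tangent space s·γ = {γ ∘ ad(x) : x ∈ s} equals r·γ = {γ ∘ ad(x) : x ∈ r} if and only if γ vanishes identically on u. -/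
open Module LieModule

section Casimir

variable {K L V ι : Type*} [Field K] [LieRing L] [LieAlgebra K L]
  [AddCommGroup V] [Module K V] [LieRingModule L V] [LieModule K L V]
  [Fintype ι] [DecidableEq ι]

/-- The Casimir operator on `V` of a nondegenerate bilinear form `B`, computed in the basis `b`. -/
noncomputable def casimir (V : Type*) [AddCommGroup V] [Module K V] [LieRingModule L V]
    [LieModule K L V] (B : LinearMap.BilinForm K L) (hB : B.Nondegenerate) (b : Basis ι K L) :
    End K V :=
  ∑ i, toEnd K L V (B.dualBasis hB b i) * toEnd K L V (b i)

variable {B : LinearMap.BilinForm K L} (hB : B.Nondegenerate) (b : Basis ι K L)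

lemma casimir_apply (v : V) :
    casimir V B hB b v = ∑ i, ⁅B.dualBasis hB b i, ⁅b i, v⁆⁆ := by
  simp [casimir]

lemma sum_apply_dualBasis_smul (x : L) : ∑ j, B (B.dualBasis hB b j) x • b j = x := by
  have h (j : ι) : B (B.dualBasis hB b j) x = b.repr x j := by
    conv_lhs => rw [← b.sum_repr x, map_sum]
    simp [LinearMap.BilinForm.apply_dualBasis_left]
  simp only [h, b.sum_repr]

lemma sum_apply_smul_dualBasis (x : L) : ∑ j, B x (b j) • B.dualBasis hB b j = x := by
  simpa using (B.dualBasis hB b).sum_repr x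

lemma casimir_lie (hinv : B.lieInvariant L) (x : L) (v : V) :
    casimir V B hB b ⁅x, v⁆ = ⁅x, casimir V B hB b v⁆ := by
  set d := B.dualBasis hB b
  have expand (i : ι) : ⁅x, ⁅d i, ⁅b i, v⁆⁆⁆ - ⁅d i, ⁅b i, ⁅x, v⁆⁆⁆ =
      ∑ j, B ⁅x, d i⁆ (b j) • ⁅d j, ⁅b i, v⁆⁆ + ∑ j, B (d j) ⁅x, b i⁆ • ⁅d i, ⁅b j, v⁆⁆ := by
    have h₁ : ⁅⁅x, d i⁆, ⁅b i, v⁆⁆ = ∑ j, B ⁅x, d i⁆ (b j) • ⁅d j, ⁅b i, v⁆⁆ := by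
      conv_lhs => rw [← sum_apply_smul_dualBasis hB b ⁅x, d i⁆]
      simp [sum_lie, d]
    have h₂ : ⁅d i, ⁅⁅x, b i⁆, v⁆⁆ = ∑ j, B (d j) ⁅x, b i⁆ • ⁅d i, ⁅b j, v⁆⁆ := by
      conv_lhs => rw [← sum_apply_dualBasis_smul hB b ⁅x, b i⁆]
      simp [sum_lie, lie_sum, d]
    rw [← h₁, ← h₂, leibniz_lie x (d i), leibniz_lie x (b i), lie_add]
    abel
  rw [eq_comm, ← sub_eq_zero, casimir_apply, casimir_apply, lie_sum,
    ← Finset.sum_sub_distrib, Finset.sum_congr rfl fun i _ ↦ expand i, Finset.sum_add_distrib]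
  nth_rw 2 [Finset.sum_comm]
  rw [← Finset.sum_add_distrib]
  refine Finset.sum_eq_zero fun i _ ↦ ?_
  rw [← Finset.sum_add_distrib]
  refine Finset.sum_eq_zero fun j _ ↦ ?_
  rw [hinv, neg_smul, neg_add_cancel]

lemma trace_casimir [Module.Finite K L] (q : End K L)
    (hq : ∀ x y, traceForm K L V x y = B (q x) y) :
    LinearMap.trace K V (casimir V B hB b) = LinearMap.trace K L q := by
  rw [LinearMap.trace_eq_matrix_trace K (B.dualBasis hB b) q, Matrix.trace, casimir, map_sum]
  refine Finset.sum_congr rfl fun i _ ↦ ?_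
  rw [Matrix.diag_apply, LinearMap.toMatrix_apply, LinearMap.BilinForm.dualBasis_repr_apply, ← hq]
  rfl

end Casimir

section Stabilizer

variable {K L V : Type*} [Field K] [LieRing L] [LieAlgebra K L] [Module.Finite K L]
  [AddCommGroup V] [Module K V] [LieRingModule L V] [LieModule K L V]

/-- If every functional vanishing on `h` is of the form `ρ ∘ ad a` with `a ∈ h`, then the
orthogonal complement of `h` consists of brackets of elements of `h`. -/
lemma exists_eq_lie_of_mem_orthogonal {B : LinearMap.BilinForm K L} (hB : B.Nondegenerate)
    (hsymm : B.IsSymm) (hinv : B.lieInvariant L) (h : LieSubalgebra K L) (ρ : Dual K L)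
    (hρ : ∀ φ : Dual K L, (∀ a ∈ h, φ a = 0) → ∃ a ∈ h, ∀ y, φ y = ρ ⁅a, y⁆)
    {x : L} (hx : ∀ a ∈ h, B x a = 0) :
    ∃ e ∈ h, ∃ a ∈ h, x = ⁅e, a⁆ := by
  obtain ⟨e, he⟩ := (B.toDual hB).surjective ρ
  replace he (y : L) : B e y = ρ y := by rw [← he, LinearMap.BilinForm.toDual_def]
  have key {x : L} (hx : ∀ a ∈ h, B x a = 0) : ∃ a ∈ h, x = ⁅e, a⁆ := by
    obtain ⟨a, ha, hax⟩ := hρ (B x) hx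
    refine ⟨a, ha, (B.toDual hB).injective <| LinearMap.ext fun y ↦ ?_⟩
    rw [LinearMap.BilinForm.toDual_def, LinearMap.BilinForm.toDual_def, hax, ← he,
      ← lie_skew e a, map_neg, LinearMap.neg_apply, hinv, neg_neg]
  refine ⟨e, ?_, key hx⟩
  change e ∈ h.toSubmodule
  rw [← LinearMap.BilinForm.orthogonal_orthogonal hB hsymm.isRefl h.toSubmodule,
    LinearMap.BilinForm.mem_orthogonal_iff]
  intro n hn
  rw [LinearMap.BilinForm.mem_orthogonal_iff] at hn
  obtain ⟨a, -, rfl⟩ := key (x := n) fun a ha ↦ by rw [hsymm.eq]; exact hn a ha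
  change B ⁅e, a⁆ e = 0
  simp [hinv e a e]

/-- A basis of a subspace extends to a basis of the whole space. -/
lemma exists_basis_sum_extending (W : Submodule K L) :
    ∃ (m n : ℕ) (c : Basis (Fin m) K W) (b : Basis (Fin m ⊕ Fin n) K L),
      ∀ i, b (Sum.inl i) = c i := by
  obtain ⟨W', hW'⟩ := W.exists_isCompl
  refine ⟨_, _, finBasis K W,
    ((finBasis K W).prod (finBasis K W')).map (W.prodEquivOfIsCompl W' hW'), fun i ↦ ?_⟩
  simp

/-- A functional on `V` annihilating `h • V` also annihilates the range of the Casimir operator,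
provided every functional vanishing on `h` is of the form `ρ ∘ ad a` with `a ∈ h`. -/
lemma apply_casimir_eq_zero {m n : ℕ} {B : LinearMap.BilinForm K L} (hB : B.Nondegenerate)
    (hsymm : B.IsSymm) (hinv : B.lieInvariant L) (h : LieSubalgebra K L) (ρ : Dual K L)
    (hρ : ∀ φ : Dual K L, (∀ a ∈ h, φ a = 0) → ∃ a ∈ h, ∀ y, φ y = ρ ⁅a, y⁆)
    (c : Basis (Fin m) K h) (b : Basis (Fin m ⊕ Fin n) K L) (hcb : ∀ i, b (Sum.inl i) = c i)
    (l : Dual K V) (hl : ∀ a ∈ h, ∀ v : V, l ⁅a, v⁆ = 0) (v : V) :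
    l (casimir V B hB b v) = 0 := by
  set d := B.dualBasis hB b
  have horth {x : L} (hx : ∀ a ∈ h, B x a = 0) : ∃ e ∈ h, ∃ a ∈ h, x = ⁅e, a⁆ :=
    exists_eq_lie_of_mem_orthogonal hB hsymm hinv h ρ hρ hx
  have hdb (k : Fin m ⊕ Fin n) (y : h) :
      B (d k) (y : L) = ∑ i, c.repr y i * if Sum.inl i = k then 1 else 0 := by
    have : (y : L) = ∑ i, c.repr y i • b (Sum.inl i) := by
      simp only [hcb]
      have hy := congr_arg h.toSubmodule.subtype (c.sum_repr y).symm
      simp only [map_sum, map_smul] at hy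
      exact hy
    rw [this]
    simp [d, LinearMap.BilinForm.apply_dualBasis_left]
  have hd (j : Fin n) : d (Sum.inr j) ∈ h := by
    obtain ⟨e, he, a, ha, hea⟩ := horth (x := d (Sum.inr j)) fun a ha ↦ by
      simpa using hdb (Sum.inr j) ⟨a, ha⟩
    rw [hea]
    exact h.lie_mem he ha
  have hb (i : Fin m) : b (Sum.inl i) ∈ h := by rw [hcb]; exact (c i).2
  have ht : ∑ i, ⁅d (Sum.inl i), b (Sum.inl i)⁆ ∈ h := by
    change _ ∈ h.toSubmodule
    rw [← LinearMap.BilinForm.orthogonal_orthogonal hB hsymm.isRefl h.toSubmodule,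
      LinearMap.BilinForm.mem_orthogonal_iff]
    intro x hx
    rw [LinearMap.BilinForm.mem_orthogonal_iff] at hx
    obtain ⟨e, he, a, ha, rfl⟩ := horth (x := x) fun a ha ↦ by rw [hsymm.eq]; exact hx a ha
    have htr : LinearMap.trace K h (toEnd K h h ⁅(⟨e, he⟩ : h), (⟨a, ha⟩ : h)⁆) = 0 := by simp
    rw [LinearMap.trace_eq_matrix_trace K c, Matrix.trace] at htr
    change B ⁅e, a⁆ _ = 0
    rw [map_sum, ← neg_eq_zero, ← Finset.sum_neg_distrib, ← htr]
    refine Finset.sum_congr rfl fun i _ ↦ ?_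
    have := hdb (Sum.inl i) ⁅⁅(⟨e, he⟩ : h), (⟨a, ha⟩ : h)⁆, c i⁆
    rw [Matrix.diag_apply, LinearMap.toMatrix_apply, toEnd_apply_apply]
    simp only [Sum.inl.injEq, mul_ite, mul_one, mul_zero, Finset.sum_ite_eq', Finset.mem_univ,
      if_true] at this
    rw [← this, hcb, ← hinv, ← lie_skew, hsymm.eq]
    rw [map_neg, hsymm.eq, hinv, neg_neg]
    rfl
  have hcomm (i : Fin m) : l ⁅d (Sum.inl i), ⁅b (Sum.inl i), v⁆⁆ =
      l ⁅⁅d (Sum.inl i), b (Sum.inl i)⁆, v⁆ := by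
    rw [leibniz_lie, map_add, hl _ (hb i), add_zero]
  rw [casimir_apply, map_sum, Fintype.sum_sum_type, Finset.sum_congr rfl fun i _ ↦ hcomm i,
    Finset.sum_congr rfl fun j _ ↦ hl _ (hd j) _, Finset.sum_const_zero, add_zero, ← map_sum,
    ← sum_lie]
  exact hl _ ht v

end Stabilizer

section Semisimple

variable {K L V : Type*} [Field K] [LieRing L] [LieAlgebra K L]
  [AddCommGroup V] [Module K V] [LieRingModule L V] [LieModule K L V]

/-- The radical of the trace form of a Lie module, as an ideal. -/
noncomputable def traceFormRadical (K L V : Type*) [Field K] [LieRing L] [LieAlgebra K L]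
    [AddCommGroup V] [Module K V] [LieRingModule L V] [LieModule K L V] : LieIdeal K L where
  __ := LinearMap.ker (traceForm K L V)
  lie_mem {x y} hy := by
    have hy : traceForm K L V y = 0 := hy
    refine LinearMap.mem_ker.mpr <| LinearMap.ext fun z ↦ ?_
    rw [traceForm_lieInvariant, hy]
    simp

lemma mem_traceFormRadical {x : L} : x ∈ traceFormRadical K L V ↔ traceForm K L V x = 0 := Iff.rfl

variable [Module.Finite K L] [LieAlgebra.IsKilling K L]

/-- The trace form of a module, corrected on its radical by the Killing form, is nondegenerate. -/
lemma exists_nondegenerate_invariant_form (V : Type*) [AddCommGroup V] [Module K V]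
    [LieRingModule L V] [LieModule K L V] :
    ∃ (B : LinearMap.BilinForm K L) (q : End K L), B.Nondegenerate ∧ B.IsSymm ∧
      B.lieInvariant L ∧ IsIdempotentElem q ∧
      ∀ x y, traceForm K L V x y = B (q x) y := by
  set I := traceFormRadical K L V
  set J := I.killingCompl
  have hIJ : IsCompl I.toSubmodule J.toSubmodule :=
    LieSubmodule.isCompl_toSubmodule.mpr I.isCompl_killingCompl
  set p : End K L := Submodule.projection _ _ hIJ
  have hpI (x : L) : p x ∈ I := Submodule.projection_apply_mem hIJ x
  have hpJ (x : L) : x - p x ∈ J := Submodule.sub_projection_mem hIJ x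
  have hp_of_mem {x : L} (hx : x ∈ I) : p x = x :=
    Submodule.projection_apply_of_mem_left hIJ hx
  have hp_zero {x : L} (hx : x ∈ J) : p x = 0 :=
    (Submodule.projection_apply_eq_zero_iff hIJ).mpr hx
  have hp_lie (x y : L) : p ⁅x, y⁆ = ⁅x, p y⁆ := by
    have : ⁅x, y⁆ = ⁅x, p y⁆ + ⁅x, y - p y⁆ := by simp
    rw [this, map_add, hp_of_mem (I.lie_mem (hpI y)), hp_zero (J.lie_mem (hpJ y)), add_zero]
  have hI {x : L} (hx : x ∈ I) : traceForm K L V x = 0 := hx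
  have hJ {x y : L} (hx : x ∈ I) (hy : y ∈ J) : killingForm K L x y = 0 :=
    (LieIdeal.mem_killingCompl K L I).mp hy x hx
  have hp_adj (x y : L) : killingForm K L (p x) y = killingForm K L (p x) (p y) := by
    rw [← sub_eq_zero, ← map_sub]
    exact hJ (hpI x) (hpJ y)
  set B : LinearMap.BilinForm K L := traceForm K L V + (killingForm K L) ∘ₗ p
  have hB (x y : L) : B x y = traceForm K L V x y + killingForm K L (p x) y := rfl
  have hsymm : B.IsSymm := ⟨fun x y ↦ by
    simp only [hB]
    rw [hp_adj x, hp_adj y, traceForm_comm K L V, traceForm_comm K L L (p x)]⟩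
  have hinj {x : L} (hx : ∀ y, B x y = 0) : x = 0 := by
    have hpx : p x = 0 := by
      refine Submodule.disjoint_def.mp hIJ.disjoint _ (hpI x) ?_
      refine (LieIdeal.mem_killingCompl K L I).mpr fun y hy ↦ ?_
      have := hx y
      rwa [hB, traceForm_comm, hI hy, LinearMap.zero_apply, zero_add, traceForm_comm] at this
    have hxI : x ∈ I := mem_traceFormRadical.mpr <| LinearMap.ext fun y ↦ by
      simpa [hB, hpx] using hx y
    rw [← hp_of_mem hxI, hpx]
  refine ⟨B, 1 - p, ?_, hsymm, ?_, ?_, ?_⟩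
  · exact ⟨fun x hx ↦ hinj hx, fun x hx ↦ hinj fun y ↦ by rw [hsymm.eq]; exact hx y⟩
  · intro x y z
    rw [hB, hB, hp_lie, traceForm_lieInvariant, traceForm_lieInvariant, neg_add]
  · exact IsIdempotentElem.one_sub <| LinearMap.ext fun x ↦ hp_of_mem (hpI x)
  · intro x y
    simp [hB, hI (hpI x), hp_of_mem (hpI x)]

lemma derivedSeries_one_eq_top_of_isKilling (K L : Type*) [Field K] [LieRing L] [LieAlgebra K L]
    [Module.Finite K L] [LieAlgebra.IsKilling K L] : LieAlgebra.derivedSeries K L 1 = ⊤ := by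
  set D := LieAlgebra.derivedSeries K L 1
  have hD : D.killingCompl = ⊥ := by
    rw [LieSubmodule.eq_bot_iff]
    intro x hx
    have hcomm (y : L) : ⁅x, y⁆ = 0 := by
      refine LinearMap.ker_eq_bot'.mp (LieAlgebra.IsKilling.ker_killingForm_eq_bot K L) _ ?_
      ext z
      rw [traceForm_apply_lie_apply, traceForm_comm]
      exact (LieIdeal.mem_killingCompl K L D).mp hx _
        (LieSubmodule.lie_mem_lie (LieSubmodule.mem_top y) (LieSubmodule.mem_top z))
    have hx' : x ∈ LieAlgebra.center K L := fun y ↦ by rw [← lie_skew, hcomm, neg_zero]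
    rwa [LieAlgebra.center_eq_bot, LieSubmodule.mem_bot] at hx'
  have := D.isCompl_killingCompl.sup_eq_top
  rwa [hD, sup_bot_eq] at this

/-- A finite-dimensional module without invariants over a semisimple Lie algebra is zero as soon as
its trace form vanishes. -/
lemma subsingleton_of_traceForm_eq_zero [CharZero K] [Module.Finite K V]
    (hV : ∀ v : V, (∀ x : L, ⁅x, v⁆ = 0) → v = 0) (h : traceForm K L V = 0) : Subsingleton V := by
  by_contra hne
  rw [not_subsingleton_iff_nontrivial] at hne
  have := isNilpotent_derivedSeries_of_traceForm_eq_zero h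
  have hnt := nontrivial_max_triv_of_isNilpotent K (LieAlgebra.derivedSeries K L 1) V
  obtain ⟨⟨v, hv⟩, hv0⟩ := exists_ne (0 : maxTrivSubmodule K (LieAlgebra.derivedSeries K L 1) V)
  refine hv0 (Subtype.ext (hV v fun x ↦ ?_))
  exact hv ⟨x, derivedSeries_one_eq_top_of_isKilling K L ▸ LieSubmodule.mem_top x⟩

end Semisimple

/-- Let `V` be a finite-dimensional module without invariants over a semisimple Lie algebra, and `h`
a subalgebra such that every functional vanishing on `h` is of the form `ρ ∘ ad a` with `a ∈ h`.
Then `V` has no nonzero `h`-invariant functional. -/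
lemma dual_eq_zero_of_forall_lie_eq_zero {K L : Type*} [Field K] [CharZero K] [LieRing L]
    [LieAlgebra K L] [Module.Finite K L] [LieAlgebra.IsKilling K L]
    (h : LieSubalgebra K L) (ρ : Dual K L)
    (hρ : ∀ φ : Dual K L, (∀ a ∈ h, φ a = 0) → ∃ a ∈ h, ∀ y, φ y = ρ ⁅a, y⁆)
    {V : Type*} [AddCommGroup V] [Module K V] [LieRingModule L V] [LieModule K L V]
    [Module.Finite K V] (hV : ∀ v : V, (∀ x : L, ⁅x, v⁆ = 0) → v = 0)
    (l : Dual K V) (hl : ∀ a ∈ h, ∀ v : V, l ⁅a, v⁆ = 0) : l = 0 := by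
  induction hn : finrank K V using Nat.strong_induction_on generalizing V with
  | _ n ih =>
  by_cases hT : traceForm K L V = 0
  · have := subsingleton_of_traceForm_eq_zero hV hT
    exact Subsingleton.elim _ _
  obtain ⟨B, q, hB, hsymm, hinv, hq, hTq⟩ :=
    exists_nondegenerate_invariant_form (K := K) (L := L) V
  obtain ⟨m, k, c, b, hcb⟩ := exists_basis_sum_extending h.toSubmodule
  set C := casimir V B hB b
  have hlC (v : V) : l (C v) = 0 := apply_casimir_eq_zero hB hsymm hinv h ρ hρ c b hcb l hl v
  have hC : ¬ IsNilpotent C := by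
    intro hnil
    have htr : LinearMap.trace K L q = 0 := by
      rw [← trace_casimir hB b q hTq]
      exact (LinearMap.isNilpotent_trace_of_isNilpotent hnil).eq_zero
    have hq0 := LinearMap.IsIdempotentElem.eq_zero_of_trace_eq_zero hq htr
    exact hT <| LinearMap.ext fun x ↦ LinearMap.ext fun y ↦ by simp [hTq, hq0]
  obtain ⟨N, hN⟩ := Filter.eventually_atTop.mp C.eventually_isCompl_ker_pow_range_pow
  replace hN := hN (N + 1) (Nat.le_succ N)
  have hpow_lie (x : L) (v : V) : (C ^ (N + 1)) ⁅x, v⁆ = ⁅x, (C ^ (N + 1)) v⁆ := by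
    have : Commute C (toEnd K L V x) := LinearMap.ext fun w ↦ casimir_lie hB b hinv x w
    exact LinearMap.congr_fun (this.pow_left (N + 1)) v
  let V₀ : LieSubmodule K L V :=
    { LinearMap.ker (C ^ (N + 1)) with
      lie_mem := fun {x v} hv ↦ by
        have hv : (C ^ (N + 1)) v = 0 := hv
        refine LinearMap.mem_ker.mpr ?_
        rw [hpow_lie, hv, lie_zero] }
  have hlt : finrank K V₀ < n := by
    rw [← hn]
    refine Submodule.finrank_lt (s := V₀.toSubmodule) fun htop ↦ hC ⟨N + 1, ?_⟩
    exact LinearMap.ker_eq_top.mp htop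
  have hl₀ : l ∘ₗ V₀.toSubmodule.subtype = 0 :=
    ih _ hlt (V := V₀) (fun v hv ↦ Subtype.ext <| hV v fun x ↦ congr_arg Subtype.val (hv x)) _
      (fun a ha v ↦ hl a ha v) rfl
  refine LinearMap.ext fun v ↦ ?_
  obtain ⟨v₀, hv₀, _, ⟨w, rfl⟩, rfl⟩ := Submodule.mem_sup.mp
    (hN.sup_eq_top ▸ Submodule.mem_top : v ∈ LinearMap.ker (C ^ (N + 1)) ⊔ _)
  rw [map_add, pow_succ', Module.End.mul_apply, hlC, add_zero]
  exact LinearMap.congr_fun hl₀ ⟨v₀, hv₀⟩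

/-- **Theorem 7 (Brylinski–Kostant).** Let `𝕂` be `ℝ` or `ℂ` and let `s` be a
finite-dimensional Lie algebra over `𝕂` which is a semidirect sum `s = r + u`,
where `u` is an abelian ideal, `r` is a semisimple Lie subalgebra with
`r ⊓ u = 0` and `r + u = s`, and the `r`-invariants in `u` vanish.  For
`γ ∈ s*`, the coadjoint tangent space `s·γ = {γ ∘ ad x : x ∈ s}` equals
`r·γ = {γ ∘ ad x : x ∈ r}` if and only if `γ` vanishes identically on `u`. -/
theorem coadjoint_tangent_eq_iff_vanishes_on_abelian_ideal
    (𝕂 : Type*) [RCLike 𝕂]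
    (s : Type*) [LieRing s] [LieAlgebra 𝕂 s] [Module.Finite 𝕂 s]
    (r : LieSubalgebra 𝕂 s) (u : LieIdeal 𝕂 s)
    (hr : LieAlgebra.IsSemisimple 𝕂 r)
    (hu : IsLieAbelian u)
    (hinf : r.toSubmodule ⊓ LieSubmodule.toSubmodule u = ⊥)
    (hsup : r.toSubmodule ⊔ LieSubmodule.toSubmodule u = ⊤)
    (hinv : ∀ x ∈ u, (∀ y ∈ r, ⁅y, x⁆ = 0) → x = 0)
    (γ : Module.Dual 𝕂 s) :
    {f : Module.Dual 𝕂 s | ∃ x : s, f = γ ∘ₗ (LieAlgebra.ad 𝕂 s x : s →ₗ[𝕂] s)}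
      = {f : Module.Dual 𝕂 s | ∃ x ∈ r, f = γ ∘ₗ (LieAlgebra.ad 𝕂 s x : s →ₗ[𝕂] s)}
    ↔ ∀ x ∈ u, γ x = 0 := by
  constructor
  · intro hEq
    have huu {x y : s} (hx : x ∈ u) (hy : y ∈ u) : ⁅x, y⁆ = 0 :=
      congr_arg Subtype.val (hu.trivial ⟨x, hx⟩ ⟨y, hy⟩)
    let h : LieSubalgebra 𝕂 r :=
      { carrier := {y | ∀ v ∈ u, γ ⁅(y : s), v⁆ = 0}
        zero_mem' := fun v _ ↦ by simp
        add_mem' := fun {x y} hx hy v hv ↦ by simp [hx v hv, hy v hv]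
        smul_mem' := fun t x hx v hv ↦ by simp [hx v hv]
        lie_mem' := fun {x y} hx hy v hv ↦ by
          rw [LieSubalgebra.coe_bracket, lie_lie, map_sub, hx _ (u.lie_mem hv),
            hy _ (u.lie_mem hv), sub_zero] }
    let ψ : u →ₗ[𝕂] Dual 𝕂 r :=
      ((LieModule.toEnd 𝕂 s s : s →ₗ[𝕂] End 𝕂 s).compr₂ γ).domRestrict₁₂ u.toSubmodule
        r.toSubmodule
    have hρ (φ : Dual 𝕂 r) (hφ : ∀ a ∈ h, φ a = 0) :
        ∃ a ∈ h, ∀ y, φ y = (γ ∘ₗ r.toSubmodule.subtype) ⁅a, y⁆ := by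
      have hmem : φ ∈ LinearMap.range ψ := by
        rw [← Subspace.dualCoannihilator_dualAnnihilator_eq (W := LinearMap.range ψ),
          Submodule.mem_dualAnnihilator]
        intro y hy
        rw [Submodule.mem_dualCoannihilator] at hy
        refine hφ y fun v hv ↦ ?_
        rw [← lie_skew, map_neg, neg_eq_zero]
        exact hy _ ⟨⟨v, hv⟩, rfl⟩
      obtain ⟨v, rfl⟩ := hmem
      obtain ⟨a, ha, hav⟩ : γ ∘ₗ (LieAlgebra.ad 𝕂 s v : s →ₗ[𝕂] s) ∈
          {f : Module.Dual 𝕂 s | ∃ x ∈ r, f = γ ∘ₗ (LieAlgebra.ad 𝕂 s x : s →ₗ[𝕂] s)} :=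
        hEq ▸ ⟨v, rfl⟩
      replace hav (y : s) : γ ⁅(v : s), y⁆ = γ ⁅a, y⁆ := LinearMap.congr_fun hav y
      refine ⟨⟨a, ha⟩, fun w hw ↦ ?_, fun y ↦ hav y⟩
      rw [← hav, huu v.2 hw, map_zero]
    have key := dual_eq_zero_of_forall_lie_eq_zero h _ hρ (V := u)
      (fun v hv ↦ Subtype.ext <| hinv v v.2 fun y hy ↦ congr_arg Subtype.val (hv ⟨y, hy⟩))
      (γ ∘ₗ u.toSubmodule.subtype) (fun a ha v ↦ ha v v.2)
    exact fun x hx ↦ LinearMap.congr_fun key ⟨x, hx⟩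
  · intro hγ
    refine Set.Subset.antisymm ?_ fun f ⟨x, _, hf⟩ ↦ ⟨x, hf⟩
    rintro f ⟨x, rfl⟩
    obtain ⟨a, ha, v, hv, rfl⟩ := Submodule.mem_sup.mp
      (hsup ▸ Submodule.mem_top : x ∈ r.toSubmodule ⊔ u.toSubmodule)
    refine ⟨a, ha, LinearMap.ext fun y ↦ ?_⟩
    have hvy : ⁅v, y⁆ ∈ u := lie_mem_left 𝕂 s u v y hv
    simp [hγ _ hvy]
end

section
/- Let 𝕂 be ℝ or ℂ and let s be a finite-dimensional Lie algebra over 𝕂 which is a semidirect sum s = r + u, where u is an abelian ideal of s, r is a semisimple Lie subalgebra of s with r ∩ u = 0 and r + u = s, and the space of r-invariants in u is zero (i.e., the only x ∈ u satisfying ⁅y, x⁆ = 0 for all y ∈ r is x = 0). Let γ be an element of the dual space s* that does not vanish identically on u. Then r·γ = {γ ∘ ad(x) : x ∈ r} is a proper subspace of s·γ = {γ ∘ ad(x) : x ∈ s}; in particular the subgroup corresponding to r cannot act infinitesimally transitively at γ on the coadjoint orbit of γ. -/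
open Polynomial LieModule LieAlgebra

theorem LinearMap.isNilpotent_of_trace_pow_succ_eq_zero {K V : Type*} [Field K] [CharZero K]
    [AddCommGroup V] [Module K V] [Module.Finite K V] (f : Module.End K V)
    (h : ∀ j : ℕ, LinearMap.trace K V (f ^ (j + 1)) = 0) : IsNilpotent f := by
  obtain ⟨a, q, hq, hpq⟩ : ∃ (a : ℕ) (q : K[X]), IsCoprime (X ^ (a + 1)) q ∧
      aeval f (X ^ (a + 1) * q) = 0 := by
    obtain ⟨q, hq, hnd⟩ := f.charpoly.exists_eq_pow_rootMultiplicity_mul_and_not_dvd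
      f.charpoly_monic.ne_zero 0
    refine ⟨f.charpoly.rootMultiplicity 0, q, ?_, ?_⟩
    · rw [map_zero, sub_zero] at hnd
      exact ((irreducible_X.coprime_iff_not_dvd).2 hnd).pow_left
    · rw [map_zero, sub_zero] at hq
      rw [pow_succ', mul_assoc, ← hq, map_mul, f.aeval_self_charpoly, mul_zero]
  obtain ⟨α, β, hab⟩ := hq
  have hidem : IsIdempotentElem (aeval f (α * X ^ (a + 1))) := by
    have : α * X ^ (a + 1) * (α * X ^ (a + 1)) =
        α * X ^ (a + 1) - α * β * (X ^ (a + 1) * q) := by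
      linear_combination (α * X ^ (a + 1)) * hab
    rw [IsIdempotentElem, ← map_mul, this, map_sub, map_mul _ (α * β), hpq, mul_zero, sub_zero]
  have htr : ∀ p : K[X], LinearMap.trace K V (aeval f (p * X ^ (a + 1))) = 0 := by
    intro p
    induction p using Polynomial.induction_on' with
    | add p q hp hq => rw [add_mul, map_add, map_add, hp, hq, add_zero]
    | monomial n c =>
      rw [map_mul, aeval_monomial, map_pow, aeval_X, mul_assoc, ← pow_add,
        ← Algebra.smul_def, map_smul, ← add_assoc, h, smul_zero]
  have hzero := LinearMap.IsIdempotentElem.eq_zero_of_trace_eq_zero hidem (htr α)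
  refine ⟨a + 1, ?_⟩
  have : (X : K[X]) ^ (a + 1) = X ^ (a + 1) * (α * X ^ (a + 1)) + β * (X ^ (a + 1) * q) := by
    linear_combination (-X ^ (a + 1)) * hab
  have h2 := congrArg (aeval f) this
  rwa [map_add, map_mul _ (X ^ (a + 1)), hzero, map_mul _ β, hpq, mul_zero, mul_zero, add_zero,
    map_pow, aeval_X] at h2

section
attribute [local instance] LieRing.ofAssociativeRing

theorem LieAlgebra.isNilpotent_ad_of_isFaithful {K L M : Type*} [Field K] [LieRing L]
    [LieAlgebra K L] [AddCommGroup M] [Module K M] [LieRingModule L M] [LieModule K L M]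
    [IsFaithful K L M] {x : L} (hx : IsNilpotent (toEnd K L M x)) : IsNilpotent (ad K L x) := by
  obtain ⟨n, hn⟩ := LieAlgebra.ad_nilpotent_of_nilpotent (R := K) hx
  have key : ∀ (k : ℕ) (y : L), toEnd K L M ((ad K L x ^ k) y) =
      (ad K (Module.End K M) (toEnd K L M x) ^ k) (toEnd K L M y) := by
    intro k
    induction k with
    | zero => simp
    | succ k ih =>
      intro y
      rw [pow_succ, pow_succ, Module.End.mul_apply, Module.End.mul_apply, ih, ad_apply, ad_apply,
        LieHom.map_lie]
  refine ⟨n, LinearMap.ext fun y ↦ IsFaithful.injective_toEnd (R := K) (M := M) ?_⟩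
  rw [key, hn]
  simp

end

/-- Cartan's criterion for a faithful module. -/
theorem LieAlgebra.isSolvable_of_traceForm_eq_zero {K L M : Type*} [Field K] [CharZero K]
    [LieRing L] [LieAlgebra K L] [Module.Finite K L] [AddCommGroup M] [Module K M]
    [Module.Finite K M] [LieRingModule L M] [LieModule K L M]
    (hM : ∀ x : L, (∀ m : M, ⁅x, m⁆ = 0) → x = 0) (h : traceForm K L M = 0) : IsSolvable L := by
  have : IsFaithful K L M := (isFaithful_iff' K L M).2 hM
  have hnil : LieModule.IsNilpotent (derivedSeries K L 1) M :=
    isNilpotent_derivedSeries_of_traceForm_eq_zero h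
  have hD : LieRing.IsNilpotent (derivedSeries K L 1) := by
    rw [LieAlgebra.isNilpotent_iff_forall (R := K)]
    intro x
    exact LieSubalgebra.isNilpotent_ad_of_isNilpotent_ad
      (derivedSeries K L 1 : LieSubalgebra K L) (x := x)
      (isNilpotent_ad_of_isFaithful (M := M)
        ((LieModule.isNilpotent_iff_forall' (R := K)).mp hnil x))
  obtain ⟨k, hk⟩ := IsSolvable.solvable K (derivedSeries K L 1)
  rw [LieIdeal.derivedSeries_eq_bot_iff] at hk
  refine IsSolvable.mk (R := K) (k := k + 1) ?_
  rw [derivedSeries_def, derivedSeriesOfIdeal_add]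
  exact hk

section
attribute [local instance] LieRing.ofAssociativeRing

theorem LinearMap.trace_coeff_pow_mul_lie_add {K V : Type*} [Field K] [AddCommGroup V]
    [Module K V] (E Z Y : Module.End K V) (j k : ℕ) :
    LinearMap.trace K V (((C E + C Z * X) ^ j).coeff (k + 1) * ⁅E, Y⁆) +
      LinearMap.trace K V (((C E + C Z * X) ^ j).coeff k * ⁅Z, Y⁆) = 0 := by
  set P : (Module.End K V)[X] := C E + C Z * X with hP
  have hr : (P ^ (j + 1)).coeff (k + 1) = (P ^ j).coeff (k + 1) * E + (P ^ j).coeff k * Z := by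
    rw [pow_succ, hP, mul_add, coeff_add, coeff_mul_C, ← mul_assoc, coeff_mul_X, coeff_mul_C]
  have hl : (P ^ (j + 1)).coeff (k + 1) = E * (P ^ j).coeff (k + 1) + Z * (P ^ j).coeff k := by
    rw [pow_succ', hP, add_mul, coeff_add, coeff_C_mul, mul_assoc, coeff_C_mul, X_mul, coeff_mul_X]
  have h := congrArg (fun F ↦ LinearMap.trace K V (F * Y)) (hr.symm.trans hl)
  simp only [add_mul, map_add, mul_assoc] at h
  rw [LinearMap.trace_mul_comm K E, LinearMap.trace_mul_comm K Z] at h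
  simp only [Ring.lie_def, mul_sub, map_sub]
  simp only [mul_assoc] at h ⊢
  linear_combination h

theorem LinearMap.trace_coeff_zero_pow_mul_lie {K V : Type*} [Field K] [AddCommGroup V]
    [Module K V] (E Z Y : Module.End K V) (j : ℕ) :
    LinearMap.trace K V (((C E + C Z * X) ^ j).coeff 0 * ⁅E, Y⁆) = 0 := by
  have h0 : ((C E + C Z * X) ^ j : (Module.End K V)[X]).coeff 0 = E ^ j := by
    induction j with
    | zero => simp
    | succ j ih => rw [pow_succ, mul_coeff_zero, ih, pow_succ]; simp
  rw [h0, Ring.lie_def, mul_sub, map_sub, ← mul_assoc, ← pow_succ, ← mul_assoc,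
    LinearMap.trace_mul_comm K (E ^ j * Y), ← mul_assoc, ← pow_succ', sub_self]

/-- If every element of a subspace `m` is of the form `⁅e, y⁆` with `y` normalizing `m`, then
`m` consists of ad-nilpotent elements. -/
theorem LieAlgebra.isNilpotent_ad_of_forall_exists_lie_eq {K L : Type*} [Field K] [CharZero K]
    [LieRing L] [LieAlgebra K L] [Module.Finite K L] (e : L) (m : Submodule K L)
    (hm : ∀ w ∈ m, ∃ y, ⁅e, y⁆ = w ∧ ∀ z ∈ m, ⁅z, y⁆ ∈ m) {z : L} (hz : z ∈ m) :
    IsNilpotent (ad K L z) := by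
  have key : ∀ j k : ℕ, ∀ w ∈ m, LinearMap.trace K L
      (((C (ad K L e) + C (ad K L z) * X) ^ j).coeff k * ad K L w) = 0 := by
    intro j k
    induction k with
    | zero =>
      intro w hw
      obtain ⟨y, rfl, -⟩ := hm w hw
      rw [LieHom.map_lie]
      exact LinearMap.trace_coeff_zero_pow_mul_lie _ _ _ _
    | succ k ih =>
      intro w hw
      obtain ⟨y, rfl, hy⟩ := hm w hw
      have h := LinearMap.trace_coeff_pow_mul_lie_add (ad K L e) (ad K L z) (ad K L y) j k
      rwa [← LieHom.map_lie, ← LieHom.map_lie, ih _ (hy z hz), add_zero] at h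
  refine LinearMap.isNilpotent_of_trace_pow_succ_eq_zero _ fun j ↦ ?_
  have hdeg : (C (ad K L e) + C (ad K L z) * X : (Module.End K L)[X]).natDegree ≤ 1 := by
    rw [add_comm]
    exact natDegree_linear_le
  have hcoeff := coeff_pow_of_natDegree_le (m := j) hdeg
  have h := key j j z hz
  rw [mul_one] at hcoeff
  rw [hcoeff] at h
  simpa [pow_succ] using h

end

/-- The Casimir element of a nondegenerate trace form, acting on the module. -/
theorem LieModule.exists_casimir {K L M : Type*} [Field K] [LieRing L] [LieAlgebra K L]
    [Module.Finite K L] [AddCommGroup M] [Module K M] [LieRingModule L M] [LieModule K L M]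
    (hB : (traceForm K L M).Nondegenerate) :
    ∃ Ω : Module.End K M, (∀ (x : L) (v : M), Ω ⁅x, v⁆ = ⁅x, Ω v⁆) ∧
      LinearMap.trace K M Ω = Module.finrank K L ∧
      ∀ (μ : Module.Dual K M) (v : M) (A : Module.End K L),
        (∀ x y, traceForm K L M (A x) y = μ ⁅x, ⁅y, v⁆⁆) → μ (Ω v) = LinearMap.trace K L A := by
  classical
  let b := Module.finBasis K L
  have hs : LinearMap.BilinForm.IsSymm (traceForm K L M) := ⟨traceForm_comm K L M⟩
  let d := LinearMap.BilinForm.dualBasis (traceForm K L M) hB b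
  have hd : LinearMap.BilinForm.dualBasis (traceForm K L M) hB d = b :=
    LinearMap.BilinForm.dualBasis_dualBasis hB hs b
  have hbr : ∀ x i, b.repr x i = traceForm K L M x (d i) := by
    intro x i
    rw [← LinearMap.BilinForm.dualBasis_repr_apply hB d, hd]
  have hdr : ∀ x i, d.repr x i = traceForm K L M x (b i) :=
    LinearMap.BilinForm.dualBasis_repr_apply hB b
  refine ⟨∑ i, toEnd K L M (b i) * toEnd K L M (d i), fun x v ↦ ?_, ?_, fun μ v A hA ↦ ?_⟩
  · have h1 : ∑ i, ⁅⁅x, b i⁆, ⁅d i, v⁆⁆ =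
        ∑ i, ∑ j, traceForm K L M ⁅x, b i⁆ (d j) • ⁅b j, ⁅d i, v⁆⁆ := by
      refine Finset.sum_congr rfl fun i _ ↦ ?_
      conv_lhs => rw [← b.sum_repr ⁅x, b i⁆]
      simp only [hbr, sum_lie, smul_lie]
    have h2 : ∑ i, ⁅b i, ⁅⁅x, d i⁆, v⁆⁆ =
        ∑ i, ∑ j, traceForm K L M ⁅x, d i⁆ (b j) • ⁅b i, ⁅d j, v⁆⁆ := by
      refine Finset.sum_congr rfl fun i _ ↦ ?_
      conv_lhs => rw [← d.sum_repr ⁅x, d i⁆]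
      simp only [hdr, sum_lie, lie_sum, smul_lie, lie_smul]
    have h3 : ∑ i, ⁅⁅x, b i⁆, ⁅d i, v⁆⁆ + ∑ i, ⁅b i, ⁅⁅x, d i⁆, v⁆⁆ = 0 := by
      rw [h1, h2, Finset.sum_comm, ← Finset.sum_add_distrib]
      refine Finset.sum_eq_zero fun i _ ↦ ?_
      rw [← Finset.sum_add_distrib]
      refine Finset.sum_eq_zero fun j _ ↦ ?_
      rw [← add_smul, traceForm_lieInvariant, traceForm_comm K L M (b j), neg_add_cancel, zero_smul]
    simp only [LinearMap.sum_apply, Module.End.mul_apply, toEnd_apply_apply, lie_sum]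
    rw [← sub_eq_zero, ← neg_eq_zero, neg_sub, ← Finset.sum_sub_distrib, ← h3,
      ← Finset.sum_add_distrib]
    refine Finset.sum_congr rfl fun i _ ↦ ?_
    rw [leibniz_lie x (b i), leibniz_lie x (d i), lie_add]
    abel
  · have h : ∀ i, LinearMap.trace K M (toEnd K L M (b i) * toEnd K L M (d i)) = 1 := by
      intro i
      have := LinearMap.BilinForm.apply_dualBasis_right hB hs b i i
      rwa [if_pos rfl] at this
    rw [map_sum, Finset.sum_congr rfl fun i _ ↦ h i]
    simp
  · rw [LinearMap.trace_eq_matrix_trace K b, Matrix.trace]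
    simp only [LinearMap.sum_apply, Module.End.mul_apply, toEnd_apply_apply, map_sum,
      Matrix.diag_apply, LinearMap.toMatrix_apply, hbr, hA]

/-- Every functional on `L` that vanishes on the stabilizer of `μ` is `φ ∘ ad y` for some `y` in
that stabilizer. -/
def LieModule.ConormalLeStabilizerOrbit {K L M : Type*} [Field K] [LieRing L] [LieAlgebra K L]
    [AddCommGroup M] [Module K M] [LieRingModule L M]
    (φ : Module.Dual K L) (μ : Module.Dual K M) : Prop :=
  ∀ f : Module.Dual K L, (∀ y : L, (∀ v : M, μ ⁅y, v⁆ = 0) → f y = 0) →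
    ∃ y : L, (∀ v : M, μ ⁅y, v⁆ = 0) ∧ ∀ x, f x = φ ⁅y, x⁆

/-- Under the conormal condition, the Casimir element of a nondegenerate trace form kills `μ`. -/
theorem LieModule.ConormalLeStabilizerOrbit.exists_casimir {K L M : Type*} [Field K] [CharZero K]
    [LieRing L] [LieAlgebra K L] [Module.Finite K L] [AddCommGroup M] [Module K M]
    [LieRingModule L M] [LieModule K L M] (hB : (traceForm K L M).Nondegenerate)
    {φ : Module.Dual K L} {μ : Module.Dual K M} (hμ : ConormalLeStabilizerOrbit φ μ) :
    ∃ Ω : Module.End K M, (∀ (x : L) (v : M), Ω ⁅x, v⁆ = ⁅x, Ω v⁆) ∧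
      LinearMap.trace K M Ω = Module.finrank K L ∧ ∀ v, μ (Ω v) = 0 := by
  obtain ⟨Ω, hΩ, htr, hcas⟩ := LieModule.exists_casimir hB
  refine ⟨Ω, hΩ, htr, fun v ↦ ?_⟩
  set B := traceForm K L M
  have hinv : ∀ x y z, B ⁅x, y⁆ z = B x ⁅y, z⁆ := traceForm_apply_lie_apply K L M
  have hext : ∀ x, (∀ y, B x y = 0) → x = 0 := hB.1
  have hrep : ∀ f : Module.Dual K L, ∃ x, ∀ y, B x y = f y := fun f ↦
    ⟨(LinearMap.BilinForm.toDual B hB).symm f, fun y ↦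
      LinearMap.BilinForm.apply_toDual_symm_apply f y⟩
  obtain ⟨e, he⟩ := hrep φ
  let m : Submodule K L :=
    { carrier := {z | ∀ y, (∀ v : M, μ ⁅y, v⁆ = 0) → B z y = 0}
      add_mem' := fun {a b} ha hb y hy ↦ by simp [ha y hy, hb y hy]
      zero_mem' := fun y _ ↦ by simp
      smul_mem' := fun c a ha y hy ↦ by simp [ha y hy] }
  have hstab : ∀ x y : L, (∀ v : M, μ ⁅x, v⁆ = 0) → (∀ v : M, μ ⁅y, v⁆ = 0) →
      ∀ v : M, μ ⁅⁅x, y⁆, v⁆ = 0 := by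
    intro x y hx hy v
    rw [lie_lie, map_sub, hx, hy, sub_zero]
  have hm_lie : ∀ z ∈ m, ∀ y, (∀ v : M, μ ⁅y, v⁆ = 0) → ⁅z, y⁆ ∈ m := by
    intro z hz y hy x hx
    rw [hinv]
    exact hz _ (hstab y x hy hx)
  have hm_eq : ∀ w ∈ m, ∃ y, (∀ v : M, μ ⁅y, v⁆ = 0) ∧ ⁅e, y⁆ = w := by
    intro w hw
    obtain ⟨y, hy, hwy⟩ := hμ (B w) hw
    refine ⟨y, hy, sub_eq_zero.1 (hext _ fun x ↦ ?_)⟩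
    rw [map_sub, LinearMap.sub_apply, hinv, he, hwy, sub_self]
  have hnil : ∀ z ∈ m, _root_.IsNilpotent (ad K L z) := fun z hz ↦
    isNilpotent_ad_of_forall_exists_lie_eq e m (fun w hw ↦ by
      obtain ⟨y, hy, hyw⟩ := hm_eq w hw
      exact ⟨y, hyw, fun z hz ↦ hm_lie z hz y hy⟩) hz
  have he_m : ∀ w ∈ m, B e w = 0 := by
    intro w hw
    obtain ⟨y, -, rfl⟩ := hm_eq w hw
    rw [← hinv, lie_self, map_zero, LinearMap.zero_apply]
  have hiso : ∀ z ∈ m, ∀ w ∈ m, B z w = 0 := by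
    intro z hz w hw
    obtain ⟨y, hy, rfl⟩ := hm_eq w hw
    rw [← hinv, ← lie_skew, map_neg, LinearMap.neg_apply, hinv, he_m _ (hm_lie z hz y hy),
      neg_zero]
  have hrep_m : ∀ v : M, ∃ z ∈ m, ∀ y, B z y = μ ⁅y, v⁆ := by
    intro v
    obtain ⟨z, hz⟩ := hrep (μ ∘ₗ (toModuleHom K L M : _ →ₗ[K] M) ∘ₗ
      (TensorProduct.mk K L M).flip v)
    have hz : ∀ y, B z y = μ ⁅y, v⁆ := by simpa using hz
    exact ⟨z, fun y hy ↦ by rw [hz, hy], hz⟩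
  have hm_stab : ∀ z ∈ m, ∀ v : M, μ ⁅z, v⁆ = 0 := by
    intro z hz v
    obtain ⟨w, hw, hwv⟩ := hrep_m v
    rw [← hwv, hiso w hw z hz]
  obtain ⟨z, hz, hzv⟩ := hrep_m v
  let F : L →ₗ[K] Module.Dual K L := LinearMap.mk₂ K (fun x y ↦ μ ⁅x, ⁅y, v⁆⁆)
    (by simp) (by simp) (by simp) (by simp)
  let A : Module.End K L := (LinearMap.BilinForm.toDual B hB).symm.toLinearMap ∘ₗ F
  have hA : ∀ x y, B (A x) y = μ ⁅x, ⁅y, v⁆⁆ := fun x y ↦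
    LinearMap.BilinForm.apply_toDual_symm_apply (hB := hB) (F x) y
  have hA_zero : ∀ x, (∀ v : M, μ ⁅x, v⁆ = 0) → A x = 0 := fun x hx ↦
    hext _ fun y ↦ by rw [hA, hx]
  have hA_sub : ∀ x, A x - ⁅z, x⁆ ∈ m := by
    intro x y hy
    rw [map_sub, LinearMap.sub_apply, hA, leibniz_lie, map_add, hy, add_zero, hinv, hzv, sub_self]
  have hA_pow : ∀ (n : ℕ) (x : L), ∀ v : M, μ ⁅(A ^ n) x - (ad K L z ^ n) x, v⁆ = 0 := by
    intro n x
    induction n with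
    | zero => simp
    | succ n ih =>
      intro v
      have h : A ((A ^ n) x) = A ((ad K L z ^ n) x) := by
        rw [← sub_eq_zero, ← map_sub, hA_zero _ ih]
      rw [pow_succ', pow_succ', Module.End.mul_apply, Module.End.mul_apply, h, ad_apply]
      exact hm_stab _ (hA_sub _) v
  obtain ⟨n, hn⟩ := hnil z hz
  have hA_nil : _root_.IsNilpotent A := by
    refine ⟨n + 1, LinearMap.ext fun x ↦ ?_⟩
    rw [pow_succ', Module.End.mul_apply]
    refine hA_zero _ fun v ↦ ?_
    simpa [hn] using hA_pow n x v
  rw [hcas μ v A hA]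
  exact (LinearMap.isNilpotent_trace_of_isNilpotent hA_nil).eq_zero

theorem LieModule.traceForm_nondegenerate_of_isCompl_ker {K L M : Type*} [Field K] [CharZero K]
    [LieRing L] [LieAlgebra K L] [Module.Finite K L] [HasTrivialRadical K L] [AddCommGroup M]
    [Module K M] [Module.Finite K M] [LieRingModule L M] [LieModule K L M] (I : LieIdeal K L)
    (hI : IsCompl (LieModule.ker K L M) I) : (traceForm K I M).Nondegenerate := by
  have hinv := LieModule.traceForm_lieInvariant K L M
  set J : LieIdeal K L := I ⊓ InvariantForm.orthogonal (traceForm K L M) hinv ⊤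
  have hJ_solv : IsSolvable J := by
    refine isSolvable_of_traceForm_eq_zero (K := K) (M := M) (fun x hx ↦ ?_) ?_
    · have h1 : (x : L) ∈ LieModule.ker K L M := by
        rw [LieModule.mem_ker]
        exact hx
      have h2 := (LieSubmodule.mem_inf _ _ _).2 ⟨h1, ((LieSubmodule.mem_inf _ _ _).1 x.2).1⟩
      rw [hI.inf_eq_bot] at h2
      exact Subtype.ext h2
    · ext x y
      exact (InvariantForm.mem_orthogonal _ hinv ⊤ _).1 ((LieSubmodule.mem_inf _ _ _).1 y.2).2 x
        (LieSubmodule.mem_top _)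
  have hJ_bot : J = ⊥ := HasTrivialRadical.eq_bot_of_isSolvable J
  have hsep : ∀ x : I, (∀ y : I, traceForm K I M x y = 0) → x = 0 := by
    intro x hx
    have : (x : L) ∈ J := by
      refine (LieSubmodule.mem_inf _ _ _).2 ⟨x.2,
        (InvariantForm.mem_orthogonal _ hinv ⊤ _).2 fun y _ ↦ ?_⟩
      have hy : y ∈ LieModule.ker K L M ⊔ I := by rw [hI.sup_eq_top]; exact LieSubmodule.mem_top _
      obtain ⟨a, ha, b, hb, rfl⟩ := (LieSubmodule.mem_sup _ _ _).1 hy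
      have ha' : toEnd K L M a = 0 := LinearMap.ext fun v ↦ (LieModule.mem_ker K L M a).1 ha v
      have h0 : traceForm K L M a (x : L) = 0 := by
        rw [traceForm_apply_apply, ha', LinearMap.zero_comp, map_zero]
      rw [map_add, LinearMap.add_apply, h0, zero_add, traceForm_comm]
      exact hx ⟨b, hb⟩
    rw [hJ_bot] at this
    exact Subtype.ext this
  exact ⟨hsep, fun x hx ↦ hsep x fun y ↦ by rw [traceForm_comm]; exact hx y⟩

theorem LieModule.ConormalLeStabilizerOrbit.restrict_ideal {K L M : Type*} [Field K]
    [LieRing L] [LieAlgebra K L] [AddCommGroup M] [Module K M] [LieRingModule L M]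
    [LieModule K L M] {φ : Module.Dual K L} {μ : Module.Dual K M}
    (hμ : ConormalLeStabilizerOrbit φ μ) (I : LieIdeal K L)
    (hI : IsCompl (LieModule.ker K L M) I) :
    ConormalLeStabilizerOrbit (L := I) (φ ∘ₗ I.toSubmodule.subtype) μ := by
  intro f hf
  have hI' : IsCompl I.toSubmodule (LieModule.ker K L M).toSubmodule :=
    (LieSubmodule.isCompl_toSubmodule.2 hI).symm
  have hker : ∀ a ∈ LieModule.ker K L M, ∀ v : M, ⁅a, v⁆ = 0 := fun a ha ↦
    (LieModule.mem_ker K L M a).1 ha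
  have hdec : ∀ y : L, ∃ b : I, ∃ a ∈ LieModule.ker K L M, (b : L) + a = y := by
    intro y
    obtain ⟨b, hb, a, ha, h⟩ := Submodule.mem_sup.1
      (hI'.sup_eq_top ▸ Submodule.mem_top : y ∈ I.toSubmodule ⊔ (LieModule.ker K L M).toSubmodule)
    exact ⟨⟨b, hb⟩, a, ha, h⟩
  have hdec_stab : ∀ (b : I) (a : L), a ∈ LieModule.ker K L M →
      (∀ v : M, μ ⁅(b : L) + a, v⁆ = 0) → ∀ v : M, μ ⁅b, v⁆ = 0 := by
    intro b a ha h v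
    have := h v
    rwa [add_lie, hker a ha, add_zero] at this
  obtain ⟨y, hy, hfy⟩ := hμ (f ∘ₗ I.toSubmodule.projectionOnto _ hI') fun y hy ↦ by
    obtain ⟨b, a, ha, rfl⟩ := hdec y
    have h1 : I.toSubmodule.projectionOnto _ hI' ((b : L) + a) = b := by
      rw [map_add, Submodule.projectionOnto_apply_left,
        Submodule.projectionOnto_apply_right hI' ⟨a, ha⟩, add_zero]
    rw [LinearMap.comp_apply, h1]
    exact hf b (hdec_stab b a ha hy)
  obtain ⟨b, a, ha, rfl⟩ := hdec y
  refine ⟨b, hdec_stab b a ha hy, fun x ↦ ?_⟩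
  have hax : ⁅a, (x : L)⁆ = 0 := by
    have : ⁅a, (x : L)⁆ ∈ LieModule.ker K L M ⊓ I :=
      (LieSubmodule.mem_inf _ _ _).2 ⟨lie_mem_left K L _ _ _ ha, lie_mem_right K L _ _ _ x.2⟩
    rw [hI.inf_eq_bot] at this
    exact this
  have h := hfy x
  rw [add_lie, hax, add_zero, LinearMap.comp_apply] at h
  erw [Submodule.projectionOnto_apply_left] at h
  exact h

theorem LieModule.ConormalLeStabilizerOrbit.restrict_submodule {K L M : Type*} [Field K]
    [LieRing L] [LieAlgebra K L] [AddCommGroup M] [Module K M] [LieRingModule L M]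
    {φ : Module.Dual K L} {μ : Module.Dual K M}
    (hμ : ConormalLeStabilizerOrbit φ μ) (N : LieSubmodule K L M) :
    ConormalLeStabilizerOrbit (M := N) φ (μ ∘ₗ N.toSubmodule.subtype) := by
  intro f hf
  obtain ⟨y, hy, hfy⟩ := hμ f fun y hy ↦ hf y fun v ↦ hy v
  exact ⟨y, fun v ↦ hy v, hfy⟩

theorem LieModule.ConormalLeStabilizerOrbit.eq_zero {K L : Type*} [Field K] [CharZero K]
    [LieRing L] [LieAlgebra K L] [Module.Finite K L] [HasTrivialRadical K L]
    {φ : Module.Dual K L} (n : ℕ) {M : Type*} [AddCommGroup M] [Module K M] [Module.Finite K M]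
    [LieRingModule L M] [LieModule K L M] (hn : Module.finrank K M = n)
    (hinv : ∀ v : M, (∀ x : L, ⁅x, v⁆ = 0) → v = 0)
    {μ : Module.Dual K M} (hμ : ConormalLeStabilizerOrbit φ μ) : μ = 0 := by
  induction n using Nat.strong_induction_on generalizing M with
  | _ n ih =>
  set I := (LieModule.ker K L M).killingCompl
  have hI : IsCompl (LieModule.ker K L M) I := LieIdeal.isCompl_killingCompl _
  obtain ⟨Ω, hΩI, htr, hμΩ⟩ := (hμ.restrict_ideal I hI).exists_casimir
    (traceForm_nondegenerate_of_isCompl_ker I hI)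
  have hdec : ∀ x : L, ∃ a ∈ LieModule.ker K L M, ∃ b ∈ I, a + b = x := fun x ↦
    (LieSubmodule.mem_sup _ _ _).1 (hI.sup_eq_top ▸ LieSubmodule.mem_top x)
  have hΩ : ∀ (x : L) (v : M), Ω ⁅x, v⁆ = ⁅x, Ω v⁆ := by
    intro x v
    obtain ⟨a, ha, b, hb, rfl⟩ := hdec x
    rw [LieModule.mem_ker] at ha
    rw [add_lie, add_lie, ha, ha, zero_add, zero_add]
    exact hΩI ⟨b, hb⟩ v
  have hΩ_pow : ∀ (k : ℕ) (x : L) (v : M), (Ω ^ k) ⁅x, v⁆ = ⁅x, (Ω ^ k) v⁆ := by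
    intro k x
    induction k with
    | zero => simp
    | succ k ih => intro v; rw [pow_succ, Module.End.mul_apply, Module.End.mul_apply, hΩ, ih]
  obtain ⟨k, hk, hk0⟩ := (Ω.eventually_isCompl_ker_pow_range_pow.and
    (Filter.eventually_gt_atTop 0)).exists
  by_cases hnil : LinearMap.ker (Ω ^ k) = ⊤
  · have h0 : LinearMap.trace K M Ω = 0 :=
      (LinearMap.isNilpotent_trace_of_isNilpotent ⟨k, LinearMap.ker_eq_top.1 hnil⟩).eq_zero
    rw [htr, Nat.cast_eq_zero] at h0
    have hsub : Subsingleton I := Module.finrank_zero_iff.1 h0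
    refine LinearMap.ext fun v ↦ ?_
    have hv : v = 0 := hinv v fun x ↦ by
      obtain ⟨a, ha, b, hb, rfl⟩ := hdec x
      have hb0 : b = 0 := congrArg Subtype.val (Subsingleton.elim (⟨b, hb⟩ : I) 0)
      rw [hb0, add_zero]
      exact (LieModule.mem_ker K L M a).1 ha v
    rw [hv, map_zero, map_zero]
  · let N : LieSubmodule K L M :=
      { LinearMap.ker (Ω ^ k) with
        lie_mem := fun {x v} hv ↦ by
          have hv : (Ω ^ k) v = 0 := hv
          change (Ω ^ k) ⁅x, v⁆ = 0
          rw [hΩ_pow, hv, lie_zero] }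
    have hP : ∀ v ∈ LinearMap.range (Ω ^ k), μ v = 0 := by
      intro v hv
      obtain ⟨w, rfl⟩ := hv
      obtain ⟨l, rfl⟩ := Nat.exists_eq_succ_of_ne_zero hk0.ne'
      rw [Nat.succ_eq_add_one, pow_succ', Module.End.mul_apply, hμΩ]
    have hN : μ ∘ₗ N.toSubmodule.subtype = 0 := by
      refine ih (Module.finrank K N) ?_ (M := N) rfl (fun v hv ↦ ?_)
        (hμ.restrict_submodule N)
      · rw [← hn]
        exact Submodule.finrank_lt hnil
      · exact Subtype.ext (hinv v fun x ↦ congrArg Subtype.val (hv x))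
    refine LinearMap.ext fun v ↦ ?_
    obtain ⟨a, ha, b, hb, rfl⟩ := Submodule.mem_sup.1
      (hk.sup_eq_top ▸ Submodule.mem_top :
        v ∈ LinearMap.ker (Ω ^ k) ⊔ LinearMap.range (Ω ^ k))
    rw [map_add, hP b hb, add_zero]
    exact LinearMap.congr_fun hN ⟨a, ha⟩

/-- **Theorem 7, consequence (Brylinski–Kostant).** Let `𝕂` be `ℝ` or `ℂ` and let `s`
be a finite-dimensional Lie algebra over `𝕂` which is a semidirect sum `s = r + u`,
where `u` is an abelian ideal, `r` is a semisimple Lie subalgebra with `r ⊓ u = 0`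
and `r + u = s`, and the `r`-invariants in `u` vanish.  If `γ ∈ s*` does not vanish
identically on `u`, then `r·γ = {γ ∘ ad x : x ∈ r}` is a proper subset of
`s·γ = {γ ∘ ad x : x ∈ s}`: the subgroup corresponding to `r` cannot act
infinitesimally transitively at `γ` on the coadjoint orbit. -/
theorem coadjoint_tangent_ssubset_of_not_vanishes_on_abelian_ideal
    (𝕂 : Type*) [RCLike 𝕂]
    (s : Type*) [LieRing s] [LieAlgebra 𝕂 s] [Module.Finite 𝕂 s]
    (r : LieSubalgebra 𝕂 s) (u : LieIdeal 𝕂 s)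
    (hr : LieAlgebra.IsSemisimple 𝕂 r)
    (hu : IsLieAbelian u)
    (hinf : r.toSubmodule ⊓ LieSubmodule.toSubmodule u = ⊥)
    (hsup : r.toSubmodule ⊔ LieSubmodule.toSubmodule u = ⊤)
    (hinv : ∀ x ∈ u, (∀ y ∈ r, ⁅y, x⁆ = 0) → x = 0)
    (γ : Module.Dual 𝕂 s)
    (hγ : ∃ x ∈ u, γ x ≠ 0) :
    {f : Module.Dual 𝕂 s | ∃ x ∈ r, f = γ ∘ₗ (LieAlgebra.ad 𝕂 s x : s →ₗ[𝕂] s)}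
      ⊂ {f : Module.Dual 𝕂 s | ∃ x : s, f = γ ∘ₗ (LieAlgebra.ad 𝕂 s x : s →ₗ[𝕂] s)} := by
  have := hr
  refine (Set.ssubset_iff_subset_ne).2 ⟨fun f ⟨x, _, hx⟩ ↦ ⟨x, hx⟩, fun heq ↦ ?_⟩
  have htrans : ∀ x : s, ∃ y ∈ r, ∀ w, γ ⁅x, w⁆ = γ ⁅y, w⁆ := by
    intro x
    obtain ⟨y, hy, h⟩ := heq.symm.subset ⟨x, rfl⟩
    exact ⟨y, hy, fun w ↦ LinearMap.congr_fun h w⟩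
  have habel : ∀ x ∈ u, ∀ y ∈ u, ⁅x, y⁆ = 0 := fun x hx y hy ↦
    congrArg Subtype.val (hu.trivial ⟨x, hx⟩ ⟨y, hy⟩)
  let φ : Module.Dual 𝕂 r := γ ∘ₗ r.toSubmodule.subtype
  let μ : Module.Dual 𝕂 u := γ ∘ₗ u.toSubmodule.subtype
  have hμ : ConormalLeStabilizerOrbit φ μ := by
    intro f hf
    let Ψ : r →ₗ[𝕂] Module.Dual 𝕂 u := LinearMap.mk₂ 𝕂 (fun y v ↦ μ ⁅y, v⁆)
      (by simp) (by simp) (by simp) (by simp)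
    obtain ⟨g, hg⟩ : f ∈ LinearMap.range Ψ.dualMap := by
      rw [LinearMap.range_dualMap_eq_dualAnnihilator_ker, Submodule.mem_dualAnnihilator]
      exact fun y hy ↦ hf y fun v ↦ LinearMap.congr_fun (LinearMap.mem_ker.1 hy) v
    obtain ⟨v, rfl⟩ := (Module.evalEquiv 𝕂 u).surjective g
    have hfv : ∀ y : r, f y = γ ⁅(y : s), (v : s)⁆ := fun y ↦ by rw [← hg]; rfl
    obtain ⟨y, hy, hyv⟩ := htrans (-(v : s))
    refine ⟨⟨y, hy⟩, fun w ↦ ?_, fun x ↦ ?_⟩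
    · change γ ⁅y, (w : s)⁆ = 0
      rw [← hyv, neg_lie, habel _ v.2 _ w.2, neg_zero, map_zero]
    · change f x = γ ⁅y, (x : s)⁆
      rw [← hyv, neg_lie, lie_skew, hfv]
  have hμ0 : μ = 0 := hμ.eq_zero _ rfl fun v hv ↦
    Subtype.ext (hinv v v.2 fun y hy ↦ congrArg Subtype.val (hv ⟨y, hy⟩))
  obtain ⟨x, hx, hx0⟩ := hγ
  exact hx0 (LinearMap.congr_fun hμ0 ⟨x, hx⟩)
end
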